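/- For every real number a with a > 0 and a ≠ 1, 16·K₁(a) + 8·K₂(a) = (783 − 784a + a⁴ + 540 log a + 240 a log a + 144 (log a)²)/(18 (log a)⁴), where K₁(a) := ∫_0^1 ∫_{u₁}^1 ∫_{u₂}^1 ∫_{u₃}^1 a^{u₄ − u₃ + u₂ − u₁} du₄ du₃ du₂ du₁ and K₂(a) := ∫_0^1 ∫_{u₁}^1 ∫_{u₃}^1 ∫_{u₂}^1 a^{u₄ − 3u₃ + 3u₂ − u₁} du₄ du₂ du₃ du₁. -/

import Mathlib

open Real MeasureTheory intervalIntegral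

/-!
Write `R c f` for the solution of `y' = c y + f`, `y 0 = 0`. In terms of the gaps between
consecutive variables the two exponents are `(u₂ - u₁) + (u₄ - u₃)` and
`(u₃ - u₁) + 4 (u₂ - u₃) + (u₄ - u₂)`, so with `L = log a` Duhamel's formula turns the iterated
integrals into the values at time `1` of `(R 0) (R L) (R 0) (R L) 1` and
`(R 0) (R L) (R (4 L)) (R L) 1`. Under the Laplace transform `R c` is multiplication by
`1 / (z - c)`; accordingly these operators satisfy the resolvent identity, and partial fractions
reduce both products to combinations of `R c 1` and `(R c)² 1`.
-/

/-- The solution operator `f ↦ y` of the initial value problem `y' = c y + f`, `y 0 = 0`, given by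
Duhamel's formula. It is bundled as a linear endomorphism of `C(ℝ, ℝ)` so that iterated integrals
become products in `Module.End`. -/
noncomputable def duhamel (c : ℝ) : Module.End ℝ C(ℝ, ℝ) where
  toFun f :=
    { toFun := fun s ↦ ∫ t in (0 : ℝ)..s, exp (c * (s - t)) * f t
      continuous_toFun :=
        continuous_parametric_intervalIntegral_of_continuous (by fun_prop) continuous_id }
  map_add' f g := by
    ext s
    have integrable (h : C(ℝ, ℝ)) :
        IntervalIntegrable (fun t ↦ exp (c * (s - t)) * h t) volume 0 s :=
      Continuous.intervalIntegrable (by fun_prop) _ _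
    simpa [mul_add] using integral_add (integrable f) (integrable g)
  map_smul' k f := by
    ext s
    simp [mul_left_comm]

lemma duhamel_apply (c : ℝ) (f : C(ℝ, ℝ)) (s : ℝ) :
    duhamel c f s = ∫ t in (0 : ℝ)..s, exp (c * (s - t)) * f t :=
  rfl

lemma duhamel_apply_zero (c : ℝ) (f : C(ℝ, ℝ)) : duhamel c f 0 = 0 :=
  integral_same

lemma hasDerivAt_exp_mul (c s : ℝ) : HasDerivAt (fun t ↦ exp (c * t)) (c * exp (c * s)) s := by
  simpa [mul_comm] using ((hasDerivAt_id s).const_mul c).exp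

lemma hasDerivAt_duhamel (c : ℝ) (f : C(ℝ, ℝ)) (s : ℝ) :
    HasDerivAt (duhamel c f) (c * duhamel c f s + f s) s := by
  have factor (x : ℝ) :
      duhamel c f x = exp (c * x) * ∫ t in (0 : ℝ)..x, exp (-c * t) * f t := by
    rw [duhamel_apply, ← intervalIntegral.integral_const_mul]
    congr 1 with t
    rw [← mul_assoc, ← exp_add]
    ring_nf
  have continuous_integrand : Continuous fun t ↦ exp (-c * t) * f t := by fun_prop
  have primitive := (continuous_integrand.integral_hasStrictDerivAt 0 s).hasDerivAt
  rw [funext factor]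
  refine ((hasDerivAt_exp_mul c s).mul primitive).congr_deriv ?_
  have cancel : exp (c * s) * exp (-c * s) = 1 := by rw [← exp_add]; simp
  linear_combination f s * cancel

lemma duhamel_apply_eq_of_hasDerivAt {c : ℝ} {f : C(ℝ, ℝ)} {y : ℝ → ℝ} (hy₀ : y 0 = 0)
    (hy : ∀ t, HasDerivAt y (c * y t + f t) t) (s : ℝ) : duhamel c f s = y s := by
  have deriv_weighted (t : ℝ) :
      HasDerivAt (fun t ↦ exp (c * (s - t)) * y t) (exp (c * (s - t)) * f t) t := by
    have weight := (((hasDerivAt_id t).const_sub s).const_mul c).exp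
    exact (weight.mul (hy t)).congr_deriv (by simp only [id]; ring)
  rw [duhamel_apply, integral_eq_sub_of_hasDerivAt (fun t _ ↦ deriv_weighted t)
    (Continuous.intervalIntegrable (by fun_prop) _ _)]
  simp [hy₀]

lemma duhamel_mul_duhamel {p q : ℝ} (hpq : p ≠ q) :
    duhamel p * duhamel q = (p - q)⁻¹ • (duhamel p - duhamel q) := by
  have hpq' : p - q ≠ 0 := sub_ne_zero.mpr hpq
  ext f s
  refine duhamel_apply_eq_of_hasDerivAt (y := fun s ↦ (p - q)⁻¹ * (duhamel p f s - duhamel q f s))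
    (by simp [duhamel_apply_zero]) (fun t ↦ ?_) s
  refine (((hasDerivAt_duhamel p f t).sub (hasDerivAt_duhamel q f t)).const_mul
    (p - q)⁻¹).congr_deriv ?_
  field_simp
  ring

lemma duhamel_one_apply {c : ℝ} (hc : c ≠ 0) (s : ℝ) :
    duhamel c 1 s = (exp (c * s) - 1) / c :=
  duhamel_apply_eq_of_hasDerivAt (y := fun s ↦ (exp (c * s) - 1) / c) (by simp)
    (fun t ↦ (((hasDerivAt_exp_mul c t).sub_const 1).div_const c).congr_deriv
      (by simp only [ContinuousMap.one_apply]; field_simp; ring)) s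

lemma duhamel_zero_one_apply (s : ℝ) : duhamel 0 1 s = s := by
  simp [duhamel_apply]

lemma duhamel_sq_one_apply {c : ℝ} (hc : c ≠ 0) (s : ℝ) :
    (duhamel c ^ 2) 1 s = (c * s * exp (c * s) - exp (c * s) + 1) / c ^ 2 := by
  rw [sq]
  refine duhamel_apply_eq_of_hasDerivAt
    (y := fun s ↦ (c * s * exp (c * s) - exp (c * s) + 1) / c ^ 2) (by simp) (fun t ↦ ?_) s
  have product := ((hasDerivAt_id t).const_mul c).mul (hasDerivAt_exp_mul c t)
  refine (((product.sub (hasDerivAt_exp_mul c t)).add_const 1).div_const (c ^ 2)).congr_deriv ?_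
  rw [duhamel_one_apply hc]
  simp only [id]
  field_simp
  ring

lemma duhamel_zero_sq_one_apply (s : ℝ) : (duhamel 0 ^ 2) 1 s = s ^ 2 / 2 := by
  simp [sq, duhamel_apply _ (duhamel 0 1), duhamel_zero_one_apply]

lemma duhamel_mul_duhamel_sq {p q : ℝ} (hpq : p ≠ q) :
    (duhamel p * duhamel q) ^ 2 =
      ((p - q) ^ 2)⁻¹ • (duhamel p ^ 2 + duhamel q ^ 2) -
        (2 / (p - q) ^ 3) • (duhamel p - duhamel q) := by
  have hpq' : p - q ≠ 0 := sub_ne_zero.mpr hpq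
  rw [duhamel_mul_duhamel hpq, sq (duhamel p), sq (duhamel q), sq (_ • _)]
  simp only [smul_mul_smul_comm, sub_mul, mul_sub, duhamel_mul_duhamel hpq,
    duhamel_mul_duhamel hpq.symm]
  match_scalars <;> field_simp <;> ring

lemma duhamel_mul_mul_mul_duhamel {p q r : ℝ} (hpq : p ≠ q) (hpr : p ≠ r) (hqr : q ≠ r) :
    duhamel p * duhamel q * duhamel r * duhamel q =
      ((q - p) * (q - r))⁻¹ • duhamel q ^ 2 +
        ((p - q) ^ 2 * (p - r))⁻¹ • (duhamel p - duhamel q) +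
        ((r - p) * (r - q) ^ 2)⁻¹ • (duhamel r - duhamel q) := by
  have hpq' : p - q ≠ 0 := sub_ne_zero.mpr hpq
  have hpr' : p - r ≠ 0 := sub_ne_zero.mpr hpr
  have hqr' : q - r ≠ 0 := sub_ne_zero.mpr hqr
  rw [mul_assoc, duhamel_mul_duhamel hpq, duhamel_mul_duhamel hqr.symm, sq (duhamel q)]
  simp only [smul_mul_smul_comm, sub_mul, mul_sub, duhamel_mul_duhamel hpq,
    duhamel_mul_duhamel hpr, duhamel_mul_duhamel hqr]
  match_scalars <;> field_simp <;> ring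

lemma duhamel_zero_mul_duhamel_sq_one_apply {p : ℝ} (hp : p ≠ 0) (s : ℝ) :
    ((duhamel 0 * duhamel p) ^ 2) 1 s =
      ((p * s - 3) * exp (p * s) + 3 + 2 * p * s + (p * s) ^ 2 / 2) / p ^ 4 := by
  rw [duhamel_mul_duhamel_sq hp.symm]
  simp only [LinearMap.sub_apply, LinearMap.add_apply, LinearMap.smul_apply,
    ContinuousMap.sub_apply, ContinuousMap.add_apply, ContinuousMap.smul_apply, smul_eq_mul,
    duhamel_one_apply hp, duhamel_zero_one_apply, duhamel_sq_one_apply hp,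
    duhamel_zero_sq_one_apply, zero_sub]
  field_simp
  ring

lemma duhamel_zero_mul_mul_four_mul_mul_one_apply {p : ℝ} (hp : p ≠ 0) (s : ℝ) :
    (duhamel 0 * duhamel p * duhamel (4 * p) * duhamel p) 1 s =
      (exp (4 * p * s) + (80 - 48 * p * s) * exp (p * s) - 81 - 36 * p * s) / (144 * p ^ 4) := by
  have hp₄ : 4 * p ≠ 0 := mul_ne_zero four_ne_zero hp
  have hpp₄ : p ≠ 4 * p := fun h ↦ hp (by linarith)
  have sub_four_mul : p - 4 * p = -(3 * p) := by ring
  have four_mul_sub : 4 * p - p = 3 * p := by ring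
  rw [duhamel_mul_mul_mul_duhamel hp.symm hp₄.symm hpp₄]
  simp only [LinearMap.sub_apply, LinearMap.add_apply, LinearMap.smul_apply,
    ContinuousMap.sub_apply, ContinuousMap.add_apply, ContinuousMap.smul_apply, smul_eq_mul,
    duhamel_one_apply hp, duhamel_one_apply hp₄, duhamel_zero_one_apply,
    duhamel_sq_one_apply hp, zero_sub, sub_zero, sub_four_mul, four_mul_sub]
  field_simp
  ring

lemma integral_exp_mul_comp_sub_left (c x b : ℝ) (f : C(ℝ, ℝ)) :
    ∫ y in x..b, exp (c * (y - x)) * f (b - y) = duhamel c f (b - x) := by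
  simpa [duhamel_apply] using
    integral_comp_sub_left (a := x) (b := b) (fun t ↦ exp (c * (b - x - t)) * f t) b

lemma integral_exp_gaps (p q r x b : ℝ) :
    ∫ u₁ in x..b, ∫ u₂ in u₁..b, ∫ u₃ in u₂..b, ∫ u₄ in u₃..b,
        exp (p * (u₂ - u₁) + q * (u₃ - u₂) + r * (u₄ - u₃)) =
      (duhamel 0 * duhamel p * duhamel q * duhamel r) 1 (b - x) := by
  have inner (u₃ : ℝ) := integral_exp_mul_comp_sub_left r u₃ b 1
  have outer := integral_exp_mul_comp_sub_left 0 x b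
  simp only [ContinuousMap.one_apply, mul_one, zero_mul, exp_zero, one_mul] at inner outer
  simp only [exp_add, intervalIntegral.integral_const_mul, mul_assoc, inner,
    integral_exp_mul_comp_sub_left, outer, Module.End.mul_apply]

/-- Appendix A.3 of the paper: the fourth moment `E[|F₁|⁴] = 16 K₁(a) + 8 K₂(a)`
equals `(783 − 784a + a⁴ + 540 log a + 240a log a + 144 (log a)²)/(18 (log a)⁴)`. -/
theorem fourth_moment_formula (a : ℝ) (ha : 0 < a) (ha1 : a ≠ 1)
    (K₁ K₂ : ℝ)
    (hK₁ : K₁ = ∫ u₁ in (0:ℝ)..1, ∫ u₂ in u₁..1, ∫ u₃ in u₂..1, ∫ u₄ in u₃..1,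
        a ^ (u₄ - u₃ + u₂ - u₁))
    (hK₂ : K₂ = ∫ u₁ in (0:ℝ)..1, ∫ u₃ in u₁..1, ∫ u₂ in u₃..1, ∫ u₄ in u₂..1,
        a ^ (u₄ - 3 * u₃ + 3 * u₂ - u₁)) :
    16 * K₁ + 8 * K₂ =
      (783 - 784 * a + a ^ 4 + 540 * Real.log a + 240 * a * Real.log a +
        144 * (Real.log a) ^ 2) / (18 * (Real.log a) ^ 4) := by
  obtain ⟨L, rfl⟩ : ∃ L, a = exp L := ⟨log a, (exp_log ha).symm⟩
  have hL : L ≠ 0 := by simpa using ha1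
  have exponent₁ (u₁ u₂ u₃ u₄ : ℝ) : L * (u₄ - u₃ + u₂ - u₁) =
      L * (u₂ - u₁) + 0 * (u₃ - u₂) + L * (u₄ - u₃) := by ring
  have exponent₂ (u₁ u₃ u₂ u₄ : ℝ) : L * (u₄ - 3 * u₃ + 3 * u₂ - u₁) =
      L * (u₃ - u₁) + 4 * L * (u₂ - u₃) + L * (u₄ - u₂) := by ring
  simp only [← exp_mul, exponent₁, integral_exp_gaps, sub_zero] at hK₁
  simp only [← exp_mul, exponent₂, integral_exp_gaps, sub_zero] at hK₂
  rw [mul_assoc, ← sq, duhamel_zero_mul_duhamel_sq_one_apply hL] at hK₁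
  rw [duhamel_zero_mul_mul_four_mul_mul_one_apply hL] at hK₂
  have exp_four_mul : exp (4 * L) = exp L ^ 4 := exp_nat_mul L 4
  simp only [hK₁, hK₂, mul_one, exp_four_mul, log_exp]
  field_simp
  ring
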